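/- Let ω be a δ-computable, nonweak simple game with ∅ ∉ ω (and ω ≠ ∅). Then there exists a finite number ν (namely the Nakamura number ν(ω)) such that for any set X of alternatives with #X ≥ 2, the core C(ω, X, p) is nonempty for every REC-measurable profile p if and only if #X < ν. -/

import Mathlib

/-! The two halves are linked by the Nakamura number being finite, and that is where computability
enters. Given a winning coalition `S`, Kleene's recursion theorem yields a program that copies the
characteristic function of `S` until a run of the δ-indicator on the program's own index is seen to
declare it winning, and prints `0` from then on. If the answer never came, the program would decide
the winning coalition `S`, so the answer would have to come; hence the program decides a finite set,
and that set is winning (`exists_finite_winning`). Since no player belongs to every winning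
coalition, a finite winning `T` together with one winning coalition avoiding each `t ∈ T` is a
finite family with empty intersection.

If `#X < ν` and every alternative were dominated, one dominating coalition per alternative would
give fewer than `ν` winning coalitions, so some player belongs to all of them; this player has no
maximal alternative in the finite set `X`, against acyclicity (`core_nonempty_of_lt`). If
`ν ≤ #X`, place the coalitions `S₀, …, S_{ν-1}` of a minimal family with empty intersection around
a cycle of `ν` alternatives, `S_k` being the set of players who prefer alternative `k + 1` to
alternative `k`, and let each remaining alternative be dominated by an element of the cycle.
Every player misses some `S_k`, so no individual preference has a cycle, yet every alternative is
dominated (`exists_profile_core_empty`). -/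

open Classical in
/-- `e` is a characteristic index for `S`: the `e`-th partial recursive function
is the (total, 0-1 valued) characteristic function of `S`. -/
def CharIndex (e : ℕ) (S : Set ℕ) : Prop :=
  ∀ x : ℕ, (Denumerable.ofNat Nat.Partrec.Code e).eval x =
    Part.some (if x ∈ S then 1 else 0)

/-- A recursive (computable) coalition: a set of players with a characteristic index. -/
def RecSet (S : Set ℕ) : Prop := ∃ e, CharIndex e S

open Classical in
/-- The simple game `ω` is δ-computable: its δ-indicator has an extension to a
partial recursive function. -/
def DeltaComputable (ω : Set (Set ℕ)) : Prop :=
  ∃ f : ℕ →. ℕ, Nat.Partrec f ∧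
    ∀ e S, CharIndex e S → f e = Part.some (if S ∈ ω then 1 else 0)

/-- The Nakamura number of a (nonweak) simple game: the least cardinality of a
subfamily of winning coalitions with empty intersection. -/
noncomputable def nakamura {α : Type u} (ω : Set (Set α)) : Cardinal.{u} :=
  sInf {c : Cardinal | ∃ ω' ⊆ ω, ⋂₀ ω' = ∅ ∧ c = Cardinal.mk ω'}

/-- Acyclicity of a binary relation: no finite cycles, i.e. the transitive
closure is irreflexive. -/
def Acyclic {X : Type v} (r : X → X → Prop) : Prop :=
  ∀ x, ¬ Relation.TransGen r x x

/-- The dominance relation of a simple game at a profile of preferences: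
`x` dominates `y` iff some winning coalition unanimously prefers `x` to `y`. -/
def Dom {N' : Type u} {X : Type v} (ω : Set (Set N')) (p : N' → X → X → Prop)
    (x y : X) : Prop :=
  ∃ S ∈ ω, ∀ i ∈ S, p i x y

/-- The core: the set of undominated alternatives. -/
def Core {N' : Type u} {X : Type v} (ω : Set (Set N')) (p : N' → X → X → Prop) :
    Set X :=
  {x : X | ¬ ∃ y : X, Dom ω p y x}

theorem recSet_empty : RecSet ∅ := by
  refine ⟨Encodable.encode Nat.Partrec.Code.zero, fun x => ?_⟩
  rw [Denumerable.ofNat_encode]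
  simp [Nat.Partrec.Code.eval, pure, PFun.pure]

/-- A δ-computable game with a winning coalition has a finite winning coalition. -/
theorem exists_finite_winning {ω : Set (Set ℕ)} (hcomp : DeltaComputable ω)
    {S : Set ℕ} (hS : S ∈ ω) (hrec : RecSet S) : ∃ T ∈ ω, T.Finite := by
  classical
  obtain ⟨f, hf, hfω⟩ := hcomp
  obtain ⟨e, he⟩ := hrec
  obtain ⟨cf, rfl⟩ := Nat.Partrec.Code.exists_code.1 hf
  set cS := Denumerable.ofNat Nat.Partrec.Code e
  let g : Nat.Partrec.Code → ℕ →. ℕ := fun c x =>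
    bif decide (Nat.Partrec.Code.evaln x cf (Encodable.encode c) = some 1) then Part.some 0
    else cS.eval x
  have hg : Partrec₂ g := by
    have hev : Computable fun q : Nat.Partrec.Code × ℕ =>
        Nat.Partrec.Code.evaln q.2 cf (Encodable.encode q.1) :=
      (Nat.Partrec.Code.primrec_evaln.comp
        ((Primrec.snd.pair (Primrec.const cf)).pair (Primrec.encode.comp Primrec.fst))).to_comp
    have hdec : Computable fun q : Nat.Partrec.Code × ℕ =>
        decide (Nat.Partrec.Code.evaln q.2 cf (Encodable.encode q.1) = some 1) :=
      (Primrec.eq (α := Option ℕ)).decide.to_comp.comp hev (Computable.const (some 1))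
    exact Partrec.cond hdec (Computable.const 0).partrec
      (Nat.Partrec.Code.eval_part.comp (Computable.const cS) Computable.snd)
  obtain ⟨c, hc⟩ := Nat.Partrec.Code.fixed_point₂ hg
  let H : ℕ → Prop := fun x => Nat.Partrec.Code.evaln x cf (Encodable.encode c) = some 1
  have hchar : CharIndex (Encodable.encode c) {x | x ∈ S ∧ ¬ H x} := by
    intro x
    rw [Denumerable.ofNat_encode, hc]
    by_cases hx : Nat.Partrec.Code.evaln x cf (Encodable.encode c) = some 1
    · simp [g, H, hx]
    · simp only [g, H, hx, decide_false, cond_false, Set.mem_ofPred_eq, not_false_eq_true, and_true]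
      exact he x
  have hfc := hfω _ _ hchar
  by_cases hH : ∃ k, H k
  · obtain ⟨k, hk⟩ := hH
    refine ⟨{x | x ∈ S ∧ ¬ H x}, ?_, ?_⟩
    · by_contra hlose
      rw [if_neg hlose] at hfc
      have := Nat.Partrec.Code.evaln_sound (show 1 ∈ _ from hk)
      rw [hfc] at this
      simp at this
    · refine (Set.finite_lt_nat k).subset fun x hx => ?_
      by_contra hkx
      exact hx.2 (Nat.Partrec.Code.evaln_mono (not_lt.1 hkx) hk)
  · exfalso
    push Not at hH
    have hST : {x | x ∈ S ∧ ¬ H x} = S := by ext x; simp [hH x]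
    rw [hST, if_pos hS] at hfc
    have h1 : 1 ∈ cf.eval (Encodable.encode c) := by rw [hfc]; simp
    obtain ⟨k, hk⟩ := Nat.Partrec.Code.evaln_complete.1 h1
    exact hH k hk

theorem nakamura_le {ω ω' : Set (Set ℕ)} (h : ω' ⊆ ω) (h0 : ⋂₀ ω' = ∅) :
    nakamura ω ≤ Cardinal.mk ω' :=
  csInf_le' ⟨ω', h, h0, rfl⟩

theorem nakamura_attained {ω : Set (Set ℕ)} (h0 : ⋂₀ ω = ∅) :
    ∃ ω' ⊆ ω, ⋂₀ ω' = ∅ ∧ nakamura ω = Cardinal.mk ω' :=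
  csInf_mem (s := {c : Cardinal | ∃ ω' ⊆ ω, ⋂₀ ω' = ∅ ∧ c = Cardinal.mk ω'})
    ⟨_, ω, subset_rfl, h0, rfl⟩

theorem nakamura_lt_aleph0 {ω : Set (Set ℕ)} {T : Set ℕ} (hT : T ∈ ω) (hfin : T.Finite)
    (h0 : ⋂₀ ω = ∅) : nakamura ω < Cardinal.aleph0 := by
  have hav : ∀ t : ℕ, ∃ S ∈ ω, t ∉ S := by
    intro t
    by_contra! h
    exact (Set.eq_empty_iff_forall_notMem.1 h0 t) (Set.mem_sInter.2 h)
  choose A hA hAt using hav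
  have hsub : insert T (A '' T) ⊆ ω := by
    rintro _ (rfl | ⟨t, -, rfl⟩)
    exacts [hT, hA t]
  have hinter : ⋂₀ insert T (A '' T) = ∅ := by
    refine Set.eq_empty_iff_forall_notMem.2 fun t ht => ?_
    have htT : t ∈ T := ht T (Set.mem_insert _ _)
    exact hAt t (ht (A t) (Set.mem_insert_of_mem _ ⟨t, htT, rfl⟩))
  exact (nakamura_le hsub hinter).trans_lt
    (Cardinal.lt_aleph0_iff_set_finite.2 ((hfin.image A).insert T))

theorem core_nonempty_of_lt {ω : Set (Set ℕ)} {X : Type} [Finite X] [Nonempty X]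
    (hlt : Cardinal.mk X < nakamura ω) {p : ℕ → X → X → Prop} (hp : ∀ i, Acyclic (p i)) :
    (Core ω p).Nonempty := by
  by_contra hcore
  have hdom : ∀ x, ∃ y, Dom ω p y x := by
    intro x
    by_contra hx
    exact hcore ⟨x, hx⟩
  choose g S hS hpref using hdom
  have hne : ⋂₀ Set.range S ≠ ∅ := by
    intro h0
    have hsub : Set.range S ⊆ ω := by rintro _ ⟨x, rfl⟩; exact hS x
    exact absurd ((nakamura_le hsub h0).trans Cardinal.mk_range_le) (not_le.2 hlt)
  obtain ⟨i, hi⟩ := Set.nonempty_iff_ne_empty.2 hne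
  -- An acyclic relation on a finite set has a maximal element `m`, but player `i` prefers `g m`.
  have : Std.Irrefl (Relation.TransGen (p i)) := ⟨hp i⟩
  obtain ⟨m, -, hm⟩ := (Finite.wellFounded_of_trans_of_irrefl
    (Relation.TransGen (p i))).has_min Set.univ Set.univ_nonempty
  exact hm (g m) trivial (.single (hpref m i (hi _ ⟨m, rfl⟩)))

/-- The alternatives `a k` form a cycle in which `a (k + 1)` dominates `a k` via `S k`. -/
theorem exists_profile_core_empty {ω : Set (Set ℕ)} (hω : ∀ S ∈ ω, RecSet S) {n : ℕ}
    {S : Fin (n + 1) → Set ℕ} (hS : ∀ k, S k ∈ ω) (h0 : ⋂ k, S k = ∅) {X : Type}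
    (a : Fin (n + 1) ↪ X) :
    ∃ p : ℕ → X → X → Prop, (∀ i, Acyclic (p i)) ∧ (∀ x y, RecSet {i | p i x y}) ∧
      ¬ (Core ω p).Nonempty := by
  -- Alternatives off the cycle are treated like the cycle element with the same image under `r`.
  obtain ⟨r, hr⟩ : ∃ r : X → Fin (n + 1), ∀ k, r (a k) = k :=
    ⟨Function.invFun a, Function.leftInverse_invFun a.injective⟩
  refine ⟨fun i x y => x = a (r y + 1) ∧ i ∈ S (r y), fun i x hx => ?_, fun x y => ?_, ?_⟩
  · obtain ⟨k, hk⟩ : ∃ k, i ∉ S k := by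
      by_contra! h
      exact (Set.eq_empty_iff_forall_notMem.1 h0 i) (Set.mem_iInter.2 h)
    -- Following the preference upwards along a cycle increases `r` by one, so it would meet `k`.
    have hall : ∀ m : Fin (n + 1), ∃ z, r z = r x + m ∧
        Relation.TransGen (fun x y => x = a (r y + 1) ∧ i ∈ S (r y)) z z := by
      intro m
      induction m using Fin.induction with
      | zero => exact ⟨x, by simp, hx⟩
      | succ m ih =>
        obtain ⟨z, hz, hzz⟩ := ih
        obtain ⟨w, hzw, hwz⟩ := Relation.TransGen.tail'_iff.1 hzz
        refine ⟨w, ?_, Relation.TransGen.head' hwz hzw⟩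
        rw [hwz.1, hr, hz, ← Fin.coeSucc_eq_succ, add_assoc]
    obtain ⟨z, hz, hzz⟩ := hall (k - r x)
    obtain ⟨w, -, hwz⟩ := Relation.TransGen.tail'_iff.1 hzz
    rw [add_sub_cancel] at hz
    exact hk (hz ▸ hwz.2)
  · by_cases hxy : x = a (r y + 1)
    · simpa [hxy] using hω _ (hS (r y))
    · simpa [hxy] using recSet_empty
  · rintro ⟨y, hy⟩
    exact hy ⟨a (r y + 1), S (r y), hS _, fun i hi => ⟨rfl, hi⟩⟩

/-- For a δ-computable, nonweak simple game `ω` with `∅ ∉ ω`, there is a finite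
number `ν` (the Nakamura number of `ω`) such that for every set `X` of
alternatives with `#X ≥ 2`, the core is nonempty for every REC-measurable
profile of acyclic preferences iff `#X < ν`. -/
theorem stmt14 (ω : Set (Set ℕ)) (hgame : ∀ S ∈ ω, RecSet S)
    (hcomp : DeltaComputable ω) (hempty : ∅ ∉ ω)
    (hnonweak : ω.Nonempty ∧ ⋂₀ ω = ∅) :
    ∃ ν : ℕ, (ν : Cardinal) = nakamura ω ∧
      ∀ X : Type, 2 ≤ Cardinal.mk X →
        ((∀ p : ℕ → X → X → Prop,
            (∀ i, Acyclic (p i)) →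
            (∀ x y : X, RecSet {i : ℕ | p i x y}) →
            (Core ω p).Nonempty)
          ↔ Cardinal.mk X < (ν : Cardinal)) := by
  obtain ⟨⟨S, hS⟩, h0⟩ := hnonweak
  obtain ⟨T, hT, hfin⟩ := exists_finite_winning hcomp hS (hgame S hS)
  obtain ⟨ν, hν⟩ := Cardinal.lt_aleph0.1 (nakamura_lt_aleph0 hT hfin h0)
  refine ⟨ν, hν.symm, fun X hX => ⟨fun h => ?_, fun hlt p hp _ => ?_⟩⟩
  · by_contra hle
    rw [not_lt] at hle
    obtain ⟨ω', hsub, hinter, hcard⟩ := nakamura_attained h0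
    rw [hν] at hcard
    obtain ⟨s⟩ := Cardinal.mk_eq_nat_iff.1 hcard.symm
    cases ν with
    | zero =>
      -- The empty family has intersection `univ`.
      have : IsEmpty ω' := s.isEmpty
      rw [Set.isEmpty_coe_sort.1 this, Set.sInter_empty] at hinter
      exact Set.empty_ne_univ hinter.symm
    | succ n =>
      have ha : Cardinal.mk (Fin (n + 1)) ≤ Cardinal.mk X := by simpa using hle
      obtain ⟨a⟩ := ha
      have hS0 : ⋂ k, (s.symm k : Set ℕ) = ∅ := by
        rw [← hinter, Set.sInter_eq_iInter]
        exact s.symm.surjective.iInter_comp (fun S : ω' => (S : Set ℕ))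
      obtain ⟨p, hp, hrec, hcore⟩ := exists_profile_core_empty hgame
        (fun k => hsub (s.symm k).2) hS0 a
      exact hcore (h p hp hrec)
  · have : Finite X := Cardinal.lt_aleph0_iff_finite.1 (hlt.trans Cardinal.natCast_lt_aleph0)
    have : Nonempty X := Cardinal.mk_ne_zero_iff.1 (two_pos.trans_le hX).ne'
    exact core_nonempty_of_lt (hν ▸ hlt) hp
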